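/- Let r ≥ 1 be an integer, ε > 0, and let B_r = {x ∈ V : d_G(0,x) ≤ r} be the ball of radius r about 0 in the graph metric. Suppose every vertex of G has degree at most 6 and that 12εr ≤ R_eff(0, V∖B_r) ≤ r. Then the number of collisions of two independent simple random walks on G killed upon exiting B_r, both started at 0, satisfies P_{0,0}(εr ≤ Z_{B_r} ≤ 72ε⁻²r) ≥ ε²/12. -/

import Mathlib

open MeasureTheory ENNReal
open scoped Classical

noncomputable section

variable {V : Type*}

/-- The cemetery-extended state space `B ∪ {†}` carries the discrete σ-algebra. -/
instance : MeasurableSpace (Option V) := ⊤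

/-- One-step transition probabilities of the simple random walk on `G` killed
upon exiting `B`; the cemetery state `†` is `none`. -/
def killedStep (G : SimpleGraph V) [G.LocallyFinite] (B : Set V) :
    Option V → Option V → ℝ≥0∞
  | some x, some y =>
      if x ∈ B ∧ G.Adj x y ∧ y ∈ B then ((G.degree x : ℝ≥0∞))⁻¹ else 0
  | some x, none =>
      if x ∈ B then
        (((G.neighborFinset x).filter (fun y => y ∉ B)).card : ℝ≥0∞) / (G.degree x : ℝ≥0∞)
      else 1
  | none, some _ => 0
  | none, none => 1

/-- Probability that the killed walk started at `a` follows `w` for its first `n` steps. -/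
def killedCylProb (G : SimpleGraph V) [G.LocallyFinite] (B : Set V) (a : V)
    {n : ℕ} (w : Fin (n + 1) → Option V) : ℝ≥0∞ :=
  (if w 0 = some a then 1 else 0) *
    ∏ i : Fin n, killedStep G B (w i.castSucc) (w i.succ)

/-- `μ` is the law of the simple random walk on `G` killed upon exiting `B`, started at `a`:
it is a probability measure on trajectories with the correct finite-dimensional
distributions. -/
def IsKilledWalkLaw (G : SimpleGraph V) [G.LocallyFinite] (B : Set V)
    (a : V) (μ : Measure (ℕ → Option V)) : Prop :=
  IsProbabilityMeasure μ ∧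
    ∀ (n : ℕ) (w : Fin (n + 1) → Option V),
      μ {ω | ∀ i : Fin (n + 1), ω i = w i} = killedCylProb G B a w

/-- `ν` is the joint law of two independent killed walks started at `a` and `b`. -/
def IsKilledPairLaw (G : SimpleGraph V) [G.LocallyFinite] (B : Set V)
    (a b : V) (ν : Measure (ℕ → Option V × Option V)) : Prop :=
  IsProbabilityMeasure ν ∧
    ∀ (n : ℕ) (w : Fin (n + 1) → Option V × Option V),
      ν {ω | ∀ i : Fin (n + 1), ω i = w i} =
        killedCylProb G B a (fun i => (w i).1) * killedCylProb G B b (fun i => (w i).2)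

/-- The number of collisions `Z_B = Σ_{n ≥ 0} 1(Xₙ = Yₙ ∈ B)` of the two coordinate
walks along a trajectory. -/
def collisions (B : Set V) (ω : ℕ → Option V × Option V) : ℝ≥0∞ :=
  ∑' n : ℕ, if ∃ x ∈ B, (ω n).1 = some x ∧ (ω n).2 = some x then 1 else 0

/-- The Dirichlet energy `ℰ(f,f) = (1/2) Σ_{x∼y} (f x - f y)²` of `f : V → ℝ`. -/
def energy (G : SimpleGraph V) (f : V → ℝ) : ℝ≥0∞ :=
  (1 / 2) * ∑' p : V × V,
    if G.Adj p.1 p.2 then ENNReal.ofReal ((f p.1 - f p.2) ^ 2) else 0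

/-- The effective resistance between `A₁` and `A₂` in `G`, every edge being a unit
resistor: its inverse is the infimum of the energies of finite-energy functions
that are `1` on `A₁` and `0` on `A₂`. -/
def effRes (G : SimpleGraph V) (A₁ A₂ : Set V) : ℝ≥0∞ :=
  (⨅ f ∈ {f : V → ℝ | energy G f ≠ ⊤ ∧ (∀ x ∈ A₁, f x = 1) ∧ ∀ x ∈ A₂, f x = 0},
    energy G f)⁻¹

/-!
The collision count `Z` is the number of visits of a Markov chain, the pair of walks, to the
diagonal. Splitting `Z²` at the earlier of two collision times, the Markov property gives
`E Z² ≤ 2 M · E Z`, where `M` is the maximum over `x ∈ B` of the expected number of collisions of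
two walks started at `x`. Paley–Zygmund then bounds `Z` from below and Markov's inequality bounds it
from above.

These expectations are compared with effective resistances through the heat kernel `K_n(x, y)`, the
law of the killed walk at time `n` divided by the degree of `y`. On one hand
`R_eff(x, Bᶜ) = ∑ₙ K_n(x, x)`. On the other hand two walks from `x` collide at time `n` with
probability `∑_y (deg y · K_n(x, y))²`, which by reversibility lies between `K_{2n}(x, x)` and
`Δ K_{2n}(x, x)`, for `Δ` a bound on the degrees. The odd times are no obstacle, because
`K_{2n+1}(x, x) ≤ K_{2n}(x, x)`. Finally, the graph distance bounds the resistance, so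
`R_eff(x, B_rᶜ) ≤ 3r` for every `x` in the ball.
-/

section Moments

theorem sq_tsum_le_two_mul_tsum_tsum_add (f : ℕ → ℝ≥0∞) :
    (∑' n, f n) ^ 2 ≤ 2 * ∑' n, ∑' k, f n * f (n + k) := by
  set upper := fun n m => if n ≤ m then f n * f m else 0
  have tsum_upper (n : ℕ) : ∑' m, upper n m = ∑' k, f n * f (n + k) := by
    rw [← (add_right_injective n).tsum_eq]
    · simp [upper]
    · intro m hm
      have hnm : n ≤ m := by by_contra h; simp [upper, h] at hm
      exact ⟨m - n, Nat.add_sub_of_le hnm⟩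
  calc (∑' n, f n) ^ 2
      = ∑' n, ∑' m, f n * f m := by
        simp only [ENNReal.tsum_mul_left, ENNReal.tsum_mul_right, sq]
    _ ≤ ∑' n, ∑' m, (upper n m + upper m n) := by
        gcongr with n m
        rcases le_total n m with h | h
        · simp [upper, h]
        · simp [upper, h, mul_comm]
    _ = ∑' n, ∑' m, upper n m + ∑' n, ∑' m, upper m n := by simp only [ENNReal.tsum_add]
    _ = 2 * ∑' n, ∑' k, f n * f (n + k) := by
        rw [ENNReal.tsum_comm (f := fun n m => upper m n), ← two_mul]
        simp only [tsum_upper]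

variable {Ω : Type*} [MeasurableSpace Ω] {μ : Measure Ω} {Z : Ω → ℝ≥0∞}

theorem sq_lintegral_mul_le {f g : Ω → ℝ≥0∞} (hf : Measurable f) (hg : Measurable g) :
    (∫⁻ ω, f ω * g ω ∂μ) ^ 2 ≤ (∫⁻ ω, f ω ^ 2 ∂μ) * ∫⁻ ω, g ω ^ 2 ∂μ := by
  have holder := ENNReal.lintegral_mul_le_Lp_mul_Lq μ Real.HolderConjugate.two_two
    hf.aemeasurable hg.aemeasurable
  calc (∫⁻ ω, f ω * g ω ∂μ) ^ 2
      ≤ ((∫⁻ ω, f ω ^ (2 : ℝ) ∂μ) ^ (1 / 2 : ℝ) * (∫⁻ ω, g ω ^ (2 : ℝ) ∂μ) ^ (1 / 2 : ℝ)) ^ 2 := by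
        gcongr
        exact holder
    _ = (∫⁻ ω, f ω ^ 2 ∂μ) * ∫⁻ ω, g ω ^ 2 ∂μ := by
        simp only [mul_pow, ← ENNReal.rpow_natCast, ← ENNReal.rpow_mul]
        norm_num

theorem paley_zygmund [IsProbabilityMeasure μ] (hZ : Measurable Z) (a : ℝ≥0∞) :
    (∫⁻ ω, Z ω ∂μ - a) ^ 2 ≤ (∫⁻ ω, Z ω ^ 2 ∂μ) * μ {ω | a ≤ Z ω} := by
  set A := {ω | a ≤ Z ω}
  have hA : MeasurableSet A := measurableSet_le measurable_const hZ
  have hind : Measurable (A.indicator (1 : Ω → ℝ≥0∞)) := measurable_one.indicator hA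
  have hsplit : ∫⁻ ω, Z ω ∂μ ≤ a + ∫⁻ ω, Z ω * A.indicator 1 ω ∂μ := by
    calc ∫⁻ ω, Z ω ∂μ ≤ ∫⁻ ω, (a + Z ω * A.indicator 1 ω) ∂μ := by
          gcongr with ω
          by_cases h : ω ∈ A
          · simp [h]
          · simpa [h] using (not_le.1 h).le
      _ = a + ∫⁻ ω, Z ω * A.indicator 1 ω ∂μ := by
          rw [lintegral_add_left measurable_const, lintegral_const, measure_univ, mul_one]
  calc (∫⁻ ω, Z ω ∂μ - a) ^ 2
      ≤ (∫⁻ ω, Z ω * A.indicator 1 ω ∂μ) ^ 2 := by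
        gcongr
        exact tsub_le_iff_left.2 hsplit
    _ ≤ (∫⁻ ω, Z ω ^ 2 ∂μ) * ∫⁻ ω, A.indicator 1 ω ^ 2 ∂μ := sq_lintegral_mul_le hZ hind
    _ = (∫⁻ ω, Z ω ^ 2 ∂μ) * μ A := by
        rw [← lintegral_indicator_one hA]
        congr 2 with ω
        by_cases h : ω ∈ A <;> simp [h]

theorem le_measure_ge_of_sq_lintegral_le [IsProbabilityMeasure μ] (hZ : Measurable Z)
    {θ m M : ℝ} (hθ₀ : 0 ≤ θ) (hθ₁ : θ ≤ 1) (hm : 0 < m)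
    (hlow : ENNReal.ofReal m ≤ ∫⁻ ω, Z ω ∂μ) (hup : ∫⁻ ω, Z ω ∂μ ≤ ENNReal.ofReal M)
    (hsq : ∫⁻ ω, Z ω ^ 2 ∂μ ≤ 2 * ENNReal.ofReal M * ∫⁻ ω, Z ω ∂μ) :
    (1 - θ) ^ 2 * m / (2 * M) ≤ μ.real {ω | ENNReal.ofReal (θ * m) ≤ Z ω} := by
  have hfin : ∫⁻ ω, Z ω ∂μ ≠ ∞ := (hup.trans_lt ENNReal.ofReal_lt_top).ne
  have hM : 0 < M := ENNReal.ofReal_pos.1 <|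
    (ENNReal.ofReal_pos.2 hm).trans_le (hlow.trans hup)
  set e := (∫⁻ ω, Z ω ∂μ).toReal
  have hme : m ≤ e := (ENNReal.ofReal_le_iff_le_toReal hfin).1 hlow
  have hθe : θ * m ≤ θ * e := by gcongr
  have hpz : (e - θ * m) ^ 2 ≤ 2 * M * e * μ.real {ω | ENNReal.ofReal (θ * m) ≤ Z ω} := by
    have h := (paley_zygmund hZ (ENNReal.ofReal (θ * m))).trans
      (mul_le_mul_left hsq (μ {ω | ENNReal.ofReal (θ * m) ≤ Z ω}))
    have h' := ENNReal.toReal_mono (by finiteness) h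
    rwa [ENNReal.toReal_pow, ENNReal.toReal_sub_of_le (by
        rw [ENNReal.ofReal_le_iff_le_toReal hfin]; nlinarith) hfin,
      ENNReal.toReal_ofReal (by positivity), ENNReal.toReal_mul, ENNReal.toReal_mul,
      ENNReal.toReal_mul, ENNReal.toReal_ofReal hM.le] at h'
  rw [div_le_iff₀ (by positivity)]
  have he : 0 < e := hm.trans_le hme
  refine le_of_mul_le_mul_right ?_ he
  calc (1 - θ) ^ 2 * m * e ≤ (1 - θ) ^ 2 * e * e := by gcongr
    _ = (e - θ * e) ^ 2 := by ring
    _ ≤ (e - θ * m) ^ 2 := by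
        gcongr
        nlinarith
    _ ≤ _ := hpz
    _ = _ := by ring

theorem measure_lt_le_div_of_lintegral_le (hZ : Measurable Z) {M b : ℝ} (hb : 0 < b)
    (hup : ∫⁻ ω, Z ω ∂μ ≤ ENNReal.ofReal M) :
    μ {ω | ENNReal.ofReal b < Z ω} ≤ ENNReal.ofReal (M / b) :=
  calc μ {ω | ENNReal.ofReal b < Z ω} ≤ μ {ω | ENNReal.ofReal b ≤ Z ω} :=
        measure_mono fun _ => le_of_lt (α := ℝ≥0∞)
    _ ≤ (∫⁻ ω, Z ω ∂μ) / ENNReal.ofReal b :=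
        meas_ge_le_lintegral_div hZ.aemeasurable (ENNReal.ofReal_pos.2 hb).ne'
          ENNReal.ofReal_ne_top
    _ ≤ ENNReal.ofReal M / ENNReal.ofReal b := by gcongr
    _ = ENNReal.ofReal (M / b) := (ENNReal.ofReal_div_of_pos hb).symm

theorem le_measure_mem_Icc_of_sq_lintegral_le [IsProbabilityMeasure μ] (hZ : Measurable Z)
    {θ m M b : ℝ} (hθ₀ : 0 ≤ θ) (hθ₁ : θ ≤ 1) (hm : 0 < m) (hb : 0 < b)
    (hlow : ENNReal.ofReal m ≤ ∫⁻ ω, Z ω ∂μ) (hup : ∫⁻ ω, Z ω ∂μ ≤ ENNReal.ofReal M)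
    (hsq : ∫⁻ ω, Z ω ^ 2 ∂μ ≤ 2 * ENNReal.ofReal M * ∫⁻ ω, Z ω ∂μ) :
    ENNReal.ofReal ((1 - θ) ^ 2 * m / (2 * M) - M / b) ≤
      μ {ω | ENNReal.ofReal (θ * m) ≤ Z ω ∧ Z ω ≤ ENNReal.ofReal b} := by
  have hM : 0 ≤ M := (ENNReal.ofReal_pos.1 <|
    (ENNReal.ofReal_pos.2 hm).trans_le (hlow.trans hup)).le
  calc ENNReal.ofReal ((1 - θ) ^ 2 * m / (2 * M) - M / b)
      = ENNReal.ofReal ((1 - θ) ^ 2 * m / (2 * M)) - ENNReal.ofReal (M / b) :=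
        ENNReal.ofReal_sub _ (by positivity)
    _ ≤ μ {ω | ENNReal.ofReal (θ * m) ≤ Z ω} - μ {ω | ENNReal.ofReal b < Z ω} := by
        gcongr
        · exact ENNReal.ofReal_le_of_le_toReal
            (le_measure_ge_of_sq_lintegral_le hZ hθ₀ hθ₁ hm hlow hup hsq)
        · exact measure_lt_le_div_of_lintegral_le hZ hb hup
    _ ≤ μ ({ω | ENNReal.ofReal (θ * m) ≤ Z ω} \ {ω | ENNReal.ofReal b < Z ω}) :=
        le_measure_sdiff
    _ = μ {ω | ENNReal.ofReal (θ * m) ≤ Z ω ∧ Z ω ≤ ENNReal.ofReal b} := by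
        congr 1
        ext ω
        simp

end Moments

section MarkovChain

variable {S T : Type*}

/-- The `n`-step transition weights out of `a` of the Markov chain with one-step weights `q`. -/
def stepProb (q : S → S → ℝ≥0∞) (a : S) : ℕ → S → ℝ≥0∞
  | 0 => Pi.single a 1
  | n + 1 => fun c => ∑' b, stepProb q a n b * q b c

theorem stepProb_prod (p : S → S → ℝ≥0∞) (q : T → T → ℝ≥0∞) (a : S × T) (n : ℕ) (b : S × T) :
    stepProb (fun s t => p s.1 t.1 * q s.2 t.2) a n b =
      stepProb p a.1 n b.1 * stepProb q a.2 n b.2 := by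
  induction n generalizing b with
  | zero =>
    simp only [stepProb, Pi.single_apply, Prod.ext_iff, ite_and]
    split_ifs <;> simp
  | succ n ih =>
    simp only [stepProb, ih, ENNReal.tsum_prod', ← ENNReal.tsum_mul_left, ← ENNReal.tsum_mul_right]
    rw [ENNReal.tsum_comm]
    refine tsum_congr fun _ => tsum_congr fun _ => ?_
    ring

/-- The Green function of the Markov chain with one-step weights `q`: the expected number of visits
to `D` when started from `a`. -/
def greenFun (q : S → S → ℝ≥0∞) (D : Set S) (a : S) : ℝ≥0∞ :=
  ∑' n, ∑' b : D, stepProb q a n b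

/-- The number of visits of the trajectory `ω` to `D`. -/
def visits (D : Set S) (ω : ℕ → S) : ℝ≥0∞ :=
  ∑' n, D.indicator 1 (ω n)

variable [MeasurableSpace S]

/-- `μ` has the finite-dimensional distributions of the Markov chain with one-step weights `q`
started from `a`. -/
def IsMarkovLaw (q : S → S → ℝ≥0∞) (a : S) (μ : Measure (ℕ → S)) : Prop :=
  ∀ (n : ℕ) (w : Fin (n + 1) → S),
    μ {ω | ∀ i : Fin (n + 1), ω i = w i} =
      (Pi.single a 1 : S → ℝ≥0∞) (w 0) * ∏ i : Fin n, q (w i.castSucc) (w i.succ)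

/-- The first `n + 1` states of a trajectory. -/
def initialSegment (n : ℕ) (ω : ℕ → S) : Fin (n + 1) → S := fun i => ω i

theorem measurable_initialSegment (n : ℕ) : Measurable (initialSegment (S := S) n) :=
  measurable_pi_lambda _ fun _ => measurable_pi_apply _

theorem measurableSet_eval_eq [MeasurableSingletonClass S] (n : ℕ) (a : S) :
    MeasurableSet {ω : ℕ → S | ω n = a} :=
  measurable_pi_apply (X := fun _ => S) n (measurableSet_singleton a)

theorem measurable_visits {D : Set S} (hD : MeasurableSet D) : Measurable (visits D) :=
  Measurable.tsum fun n =>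
    (measurable_one.indicator hD).comp (measurable_pi_apply (X := fun _ => S) n)

variable {q : S → S → ℝ≥0∞} {a : S} {μ : Measure (ℕ → S)}

theorem IsMarkovLaw.measure_snoc (hμ : IsMarkovLaw q a μ) (n : ℕ) (w : Fin (n + 1) → S) (b : S) :
    μ (initialSegment n ⁻¹' {w} ∩ {ω | ω (n + 1) = b}) =
      q (w (Fin.last n)) b * μ (initialSegment n ⁻¹' {w}) := by
  have hsnoc : initialSegment n ⁻¹' {w} ∩ {ω | ω (n + 1) = b} =
      {ω | ∀ i, ω i = (Fin.snoc w b : Fin (n + 2) → S) i} := by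
    ext ω
    simp [Fin.forall_fin_succ', initialSegment, funext_iff]
  have hinit : initialSegment n ⁻¹' {w} = {ω | ∀ i : Fin (n + 1), ω i = w i} := by
    ext ω
    simp [initialSegment, funext_iff]
  rw [hsnoc, hinit, hμ, hμ, Fin.prod_univ_castSucc]
  simp only [← Fin.castSucc_zero, Fin.snoc_castSucc, Fin.succ_last, Fin.snoc_last,
    Fin.succ_castSucc]
  ring

variable [Countable S] [MeasurableSingletonClass S]

theorem IsMarkovLaw.measure_inter_eval_succ_eq (hμ : IsMarkovLaw q a μ) (n : ℕ)
    (A : Set (Fin (n + 1) → S)) (b : S) :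
    μ (initialSegment n ⁻¹' A ∩ {ω | ω (n + 1) = b}) =
      ∑' c, μ (initialSegment n ⁻¹' A ∩ {ω | ω n = c}) * q c b := by
  have hinit := measurable_initialSegment (S := S) n
  have hA : MeasurableSet A := A.to_countable.measurableSet
  have hlaw : (μ.restrict {ω | ω (n + 1) = b}).map (initialSegment n) =
      (μ.map (initialSegment n)).withDensity fun w => q (w (Fin.last n)) b := by
    refine Measure.ext_of_singleton fun w => ?_
    rw [Measure.map_apply hinit (measurableSet_singleton w),
      Measure.restrict_apply (hinit (measurableSet_singleton w)), hμ.measure_snoc,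
      withDensity_apply _ (measurableSet_singleton w), lintegral_singleton,
      Measure.map_apply hinit (measurableSet_singleton w)]
  calc μ (initialSegment n ⁻¹' A ∩ {ω | ω (n + 1) = b})
      = (μ.restrict {ω | ω (n + 1) = b}).map (initialSegment n) A := by
        rw [Measure.map_apply hinit hA, Measure.restrict_apply (hinit hA)]
    _ = ∫⁻ ω in initialSegment n ⁻¹' A, q (ω n) b ∂μ := by
        rw [hlaw, withDensity_apply _ hA, setLIntegral_map hA (measurable_of_countable _) hinit]
        rfl
    _ = ∑' c, μ (initialSegment n ⁻¹' A ∩ {ω | ω n = c}) * q c b := by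
        rw [← lintegral_map (f := fun c => q c b) (measurable_of_countable _)
          (measurable_pi_apply n), lintegral_countable']
        refine tsum_congr fun c => ?_
        rw [Measure.map_apply (measurable_pi_apply n) (measurableSet_singleton c),
          mul_comm, Set.inter_comm]
        exact congrArg (· * q c b) (Measure.restrict_apply (measurableSet_eval_eq n c))

theorem IsMarkovLaw.measure_eval_eq (hμ : IsMarkovLaw q a μ) (n : ℕ) (b : S) :
    μ {ω | ω n = b} = stepProb q a n b := by
  induction n generalizing b with
  | zero => simpa [stepProb] using hμ 0 fun _ => b
  | succ n ih =>
    simpa [ih, stepProb] using hμ.measure_inter_eval_succ_eq n Set.univ b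

theorem IsMarkovLaw.measure_eval_eq_inter_eval_add_eq (hμ : IsMarkovLaw q a μ) (n k : ℕ)
    (b c : S) :
    μ ({ω | ω n = b} ∩ {ω | ω (n + k) = c}) = stepProb q a n b * stepProb q b k c := by
  induction k generalizing c with
  | zero =>
    rcases eq_or_ne b c with rfl | hbc
    · simp [stepProb, hμ.measure_eval_eq]
    · have hdisj : {ω : ℕ → S | ω n = b} ∩ {ω | ω n = c} = ∅ := by
        ext ω
        simpa using fun h : ω n = b => h.trans_ne hbc
      simp [stepProb, hbc.symm, hdisj]
  | succ k ih =>
    have hpre : {ω : ℕ → S | ω n = b} =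
        initialSegment (n + k) ⁻¹' {w | w ⟨n, by omega⟩ = b} := rfl
    have hstep := hμ.measure_inter_eval_succ_eq (n + k) {w | w ⟨n, by omega⟩ = b} c
    rw [← hpre] at hstep
    rw [← add_assoc, hstep]
    simp only [ih, stepProb, mul_assoc, ENNReal.tsum_mul_left]

theorem IsMarkovLaw.measure_eval_mem (hμ : IsMarkovLaw q a μ) (D : Set S) (n : ℕ) :
    μ {ω | ω n ∈ D} = ∑' b : D, stepProb q a n b := by
  simp only [← hμ.measure_eval_eq]
  exact (tsum_measure_preimage_singleton D.to_countable
    fun b _ => measurableSet_eval_eq n b).symm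

theorem IsMarkovLaw.measure_eval_mem_inter_eval_add_mem (hμ : IsMarkovLaw q a μ) (D : Set S)
    (n k : ℕ) :
    μ ({ω | ω n ∈ D} ∩ {ω | ω (n + k) ∈ D}) =
      ∑' b : D, ∑' c : D, stepProb q a n b * stepProb q b k c := by
  have hpair (b c : S) : (fun ω : ℕ → S => (ω n, ω (n + k))) ⁻¹' {(b, c)} =
      {ω | ω n = b} ∩ {ω | ω (n + k) = c} := by
    ext ω
    simp
  calc μ ({ω | ω n ∈ D} ∩ {ω | ω (n + k) ∈ D})
      = ∑' p : (D ×ˢ D : Set (S × S)), μ ((fun ω => (ω n, ω (n + k))) ⁻¹' {p.1}) :=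
        (tsum_measure_preimage_singleton (D ×ˢ D).to_countable fun p _ => by
          rw [hpair p.1 p.2]
          exact (measurableSet_eval_eq n _).inter (measurableSet_eval_eq _ _)).symm
    _ = ∑' p : D × D, μ ({ω | ω n = p.1} ∩ {ω | ω (n + k) = p.2}) := by
        rw [← (Equiv.Set.prod D D).symm.tsum_eq]
        exact tsum_congr fun p => by rw [← hpair]; rfl
    _ = ∑' b : D, ∑' c : D, stepProb q a n b * stepProb q b k c := by
        simp only [hμ.measure_eval_eq_inter_eval_add_eq]
        exact ENNReal.tsum_prod (f := fun b c : D => stepProb q a n b * stepProb q b k c)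

theorem IsMarkovLaw.lintegral_visits (hμ : IsMarkovLaw q a μ) (D : Set S) :
    ∫⁻ ω, visits D ω ∂μ = greenFun q D a := by
  have hmeas (n : ℕ) : MeasurableSet {ω : ℕ → S | ω n ∈ D} :=
    measurable_pi_apply (X := fun _ => S) n D.to_countable.measurableSet
  calc ∫⁻ ω, visits D ω ∂μ = ∫⁻ ω, ∑' n, {ω | ω n ∈ D}.indicator 1 ω ∂μ := rfl
    _ = ∑' n, μ {ω | ω n ∈ D} := by
        rw [lintegral_tsum fun n => (measurable_one.indicator (hmeas n)).aemeasurable]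
        simp only [lintegral_indicator_one (hmeas _)]
    _ = greenFun q D a := by simp only [hμ.measure_eval_mem, greenFun]

theorem IsMarkovLaw.lintegral_sq_visits_le (hμ : IsMarkovLaw q a μ) {D : Set S} {M : ℝ≥0∞}
    (hM : ∀ b ∈ D, greenFun q D b ≤ M) :
    ∫⁻ ω, visits D ω ^ 2 ∂μ ≤ 2 * M * ∫⁻ ω, visits D ω ∂μ := by
  set E : ℕ → Set (ℕ → S) := fun n => {ω | ω n ∈ D}
  have hE (n : ℕ) : MeasurableSet (E n) :=
    measurable_pi_apply (X := fun _ => S) n D.to_countable.measurableSet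
  have hEE (n k : ℕ) : Measurable ((E n ∩ E (n + k)).indicator (1 : (ℕ → S) → ℝ≥0∞)) :=
    measurable_one.indicator ((hE n).inter (hE _))
  calc ∫⁻ ω, visits D ω ^ 2 ∂μ
      ≤ ∫⁻ ω, 2 * ∑' n, ∑' k, (E n ∩ E (n + k)).indicator 1 ω ∂μ := by
        gcongr with ω
        simp only [Set.inter_indicator_one]
        exact sq_tsum_le_two_mul_tsum_tsum_add fun n => D.indicator 1 (ω n)
    _ = 2 * ∑' n, ∑' k, μ (E n ∩ E (n + k)) := by
        rw [lintegral_const_mul _ (Measurable.tsum fun n => Measurable.tsum fun k => hEE n k),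
          lintegral_tsum fun n => (Measurable.tsum fun k => hEE n k).aemeasurable]
        simp only [lintegral_tsum fun k => (hEE _ k).aemeasurable,
          lintegral_indicator_one ((hE _).inter (hE _))]
    _ = 2 * ∑' n, ∑' b : D, stepProb q a n b * greenFun q D b := by
        simp only [E, hμ.measure_eval_mem_inter_eval_add_mem, greenFun, ← ENNReal.tsum_mul_left]
        congr! 3 with n
        exact ENNReal.tsum_comm
    _ ≤ 2 * ∑' n, ∑' b : D, stepProb q a n b * M := by
        gcongr with n b
        exact hM b b.2
    _ = 2 * M * ∫⁻ ω, visits D ω ∂μ := by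
        simp only [hμ.lintegral_visits, greenFun, ENNReal.tsum_mul_right]
        ring

end MarkovChain

section GraphDistance

variable {G : SimpleGraph V}

theorem exists_dist_eq_of_le_dist (hconn : G.Connected) {o v : V} {n : ℕ}
    (hn : n ≤ G.dist o v) :
    ∃ u, G.dist o u = n ∧ G.dist u v = G.dist o v - n := by
  obtain ⟨p, hp⟩ := hconn.exists_walk_length_eq_dist o v
  have htake := SimpleGraph.dist_le (p.take n)
  have hdrop := SimpleGraph.dist_le (p.drop n)
  rw [SimpleGraph.Walk.take_length] at htake
  rw [SimpleGraph.Walk.drop_length] at hdrop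
  have htriangle := hconn.dist_triangle (u := o) (v := p.getVert n) (w := v)
  exact ⟨p.getVert n, by omega, by omega⟩

theorem finite_setOf_dist_le [G.LocallyFinite] (hconn : G.Connected) (o : V) (r : ℕ) :
    {x | G.dist o x ≤ r}.Finite := by
  induction r with
  | zero =>
    refine (Set.finite_singleton o).subset fun x hx => ?_
    exact (hconn.dist_eq_zero_iff.1 (Nat.le_zero.1 hx)).symm
  | succ r ih =>
    refine (ih.union (ih.biUnion fun u _ => (G.neighborFinset u).finite_toSet)).subset ?_
    intro x hx
    rcases (show G.dist o x ≤ r + 1 from hx).lt_or_eq with hlt | heq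
    · exact Or.inl (Nat.lt_succ_iff.1 hlt)
    · obtain ⟨u, hu, hux⟩ := exists_dist_eq_of_le_dist hconn (r.le_succ.trans heq.ge)
      have hadj : G.Adj u x := SimpleGraph.dist_eq_one_iff_adj.1 (by omega)
      exact Or.inr (Set.mem_biUnion (show G.dist o u ≤ r from hu.le) (by simpa using hadj))

theorem countable_of_connected [G.LocallyFinite] (hconn : G.Connected) : Countable V := by
  obtain ⟨o⟩ := hconn.nonempty
  have hcover : (Set.univ : Set V) = ⋃ r, {x | G.dist o x ≤ r} :=
    (Set.iUnion_eq_univ_iff.2 fun x => ⟨G.dist o x, le_refl (G.dist o x)⟩).symm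
  rw [← Set.countable_univ_iff, hcover]
  exact Set.countable_iUnion fun r => (finite_setOf_dist_le hconn o r).countable

theorem exists_vertex_dist_eq [G.LocallyFinite] [Infinite V] (hconn : G.Connected) (o : V) (n : ℕ) :
    ∃ u, G.dist o u = n := by
  obtain ⟨v, hv⟩ := (finite_setOf_dist_le hconn o n).infinite_compl.nonempty
  obtain ⟨u, hu, -⟩ := exists_dist_eq_of_le_dist hconn (le_of_not_ge (a := G.dist o v) hv)
  exact ⟨u, hu⟩

end GraphDistance

section Resistance

variable {G : SimpleGraph V}

theorem sum_ofReal_sq_sub_getVert_le_energy {x y : V} {p : G.Walk x y} (hp : p.IsPath)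
    (f : V → ℝ) :
    ∑ i : Fin p.length, ENNReal.ofReal ((f (p.getVert i) - f (p.getVert (i + 1))) ^ 2) ≤
      energy G f := by
  set dart : Fin p.length ⊕ Fin p.length → V × V := Sum.elim
    (fun i => (p.getVert i, p.getVert (i + 1))) (fun i => (p.getVert (i + 1), p.getVert i))
  have vert_inj {i j : ℕ} (hi : i ≤ p.length) (hj : j ≤ p.length) :
      p.getVert i = p.getVert j → i = j := fun h => hp.getVert_injOn hi hj h
  have dart_inj : Function.Injective dart := by
    rintro (⟨i, hi⟩ | ⟨i, hi⟩) (⟨j, hj⟩ | ⟨j, hj⟩) h <;>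
      obtain ⟨hfst, hsnd⟩ := Prod.ext_iff.1 h <;>
      have hfst := vert_inj (by omega) (by omega) hfst <;>
      have hsnd := vert_inj (by omega) (by omega) hsnd <;>
      simp only [Sum.inl.injEq, Sum.inr.injEq, reduceCtorEq, Fin.mk.injEq] <;> omega
  have hdart := ENNReal.tsum_comp_le_tsum_of_injective dart_inj
    fun e => if G.Adj e.1 e.2 then ENNReal.ofReal ((f e.1 - f e.2) ^ 2) else 0
  simp only [tsum_fintype, Fintype.sum_sum_type, dart, Sum.elim_inl, Sum.elim_inr,
    p.adj_getVert_succ (Fin.is_lt _), (p.adj_getVert_succ (Fin.is_lt _)).symm, if_true,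
    sub_sq_comm (f (p.getVert (_ + 1)))] at hdart
  rw [← two_mul] at hdart
  rw [energy, one_div, ← ENNReal.div_eq_inv_mul, ENNReal.le_div_iff_mul_le (by simp) (by simp),
    mul_comm]
  exact hdart

theorem ofReal_sq_sub_le_length_mul_energy {x y : V} {p : G.Walk x y} (hp : p.IsPath)
    (f : V → ℝ) : ENNReal.ofReal ((f x - f y) ^ 2) ≤ p.length * energy G f := by
  set drop : Fin p.length → ℝ := fun i => f (p.getVert i) - f (p.getVert (i + 1))
  have htelescope : f x - f y = ∑ i, drop i := by
    rw [Fin.sum_univ_eq_sum_range (fun i => f (p.getVert i) - f (p.getVert (i + 1))),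
      Finset.sum_range_sub']
    simp
  calc ENNReal.ofReal ((f x - f y) ^ 2)
      ≤ ENNReal.ofReal (p.length * ∑ i, drop i ^ 2) := by
        rw [htelescope]
        gcongr
        simpa using sq_sum_le_card_mul_sum_sq (s := Finset.univ) (f := drop)
    _ ≤ p.length * energy G f := by
        rw [ENNReal.ofReal_mul (by positivity), ENNReal.ofReal_natCast,
          ENNReal.ofReal_sum_of_nonneg fun _ _ => sq_nonneg _]
        gcongr
        exact sum_ofReal_sq_sub_getVert_le_energy hp f

theorem effRes_singleton_le_dist {A : Set V} {x u : V} (hxu : G.Reachable x u) (hu : u ∈ A) :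
    effRes G {x} A ≤ G.dist x u := by
  obtain ⟨p, hp, hlen⟩ := hxu.exists_path_of_dist
  refine ENNReal.inv_le_iff_inv_le.1 (le_iInf₂ ?_)
  rintro f ⟨-, hfx, hfA⟩
  have hdrop := ofReal_sq_sub_le_length_mul_energy hp f
  rw [hfx x rfl, hfA u hu, hlen] at hdrop
  rw [← one_div]
  exact ENNReal.div_le_of_le_mul' (by simpa using hdrop)

end Resistance

section DirichletForm

variable (G : SimpleGraph V) [G.LocallyFinite] (B : Finset V)

/-- The ordered pairs of adjacent vertices with at least one endpoint in `B`. -/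
def incidentPairs : Finset (V × V) :=
  let outgoing := B.biUnion fun x => (G.neighborFinset x).map (Function.Embedding.sectR x V)
  outgoing ∪ outgoing.map (Equiv.prodComm V V).toEmbedding

/-- The Dirichlet form `ℰ(f, g)` of the paper for functions `f`, `g` vanishing off `B`: only pairs
meeting `B` contribute to it, and the sum is restricted to those to keep it finite. -/
def dirichletForm (f g : V → ℝ) : ℝ :=
  1 / 2 * ∑ p ∈ incidentPairs G B, (f p.1 - f p.2) * (g p.1 - g p.2)

/-- The degree-weighted inner product of two functions on `B`. -/
def degInner (f g : V → ℝ) : ℝ :=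
  ∑ y ∈ B, G.degree y * f y * g y

/-- The transition operator of the simple random walk killed upon exiting `B`, which averages over
the neighbours of each vertex of `B`. It agrees with the killed walk on functions vanishing off
`B`. -/
def killedAvg : (V → ℝ) →ₗ[ℝ] V → ℝ where
  toFun f y := if y ∈ B then (∑ z ∈ G.neighborFinset y, f z) / G.degree y else 0
  map_add' f g := by
    ext y
    by_cases hy : y ∈ B <;> simp [hy, Finset.sum_add_distrib, add_div]
  map_smul' c f := by
    ext y
    by_cases hy : y ∈ B <;> simp [hy, ← Finset.mul_sum, mul_div_assoc]

variable {G B} {f g : V → ℝ}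

theorem mem_incidentPairs {p : V × V} :
    p ∈ incidentPairs G B ↔ G.Adj p.1 p.2 ∧ (p.1 ∈ B ∨ p.2 ∈ B) := by
  obtain ⟨x, y⟩ := p
  simp only [incidentPairs, Finset.mem_union, Finset.mem_map, Finset.mem_biUnion,
    SimpleGraph.mem_neighborFinset]
  constructor
  · rintro (⟨_, hx, _, hadj, ⟨⟩⟩ | ⟨_, ⟨_, hy, _, hadj, rfl⟩, ⟨⟩⟩)
    · exact ⟨hadj, Or.inl hx⟩
    · exact ⟨hadj.symm, Or.inr hy⟩
  · rintro ⟨hadj, hx | hy⟩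
    · exact Or.inl ⟨x, hx, y, hadj, rfl⟩
    · exact Or.inr ⟨(y, x), ⟨y, hy, x, hadj.symm, rfl⟩, rfl⟩

theorem sum_incidentPairs_swap (h : V × V → ℝ) :
    ∑ p ∈ incidentPairs G B, h p.swap = ∑ p ∈ incidentPairs G B, h p :=
  Finset.sum_equiv (Equiv.prodComm V V)
    (fun p => by simp [mem_incidentPairs, G.adj_comm, or_comm]) fun _ _ => rfl

theorem sum_incidentPairs_of_eq_zero {h : V × V → ℝ} (hh : ∀ p, p.1 ∉ B → h p = 0) :
    ∑ p ∈ incidentPairs G B, h p = ∑ x ∈ B, ∑ y ∈ G.neighborFinset x, h (x, y) := by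
  rw [← Finset.sum_finset_product ((incidentPairs G B).filter (·.1 ∈ B)) B
    (fun x => G.neighborFinset x) (f := h)]
  · rw [Finset.sum_filter_of_ne fun p _ => not_imp_comm.1 (hh p)]
  · intro p
    simp only [Finset.mem_filter, mem_incidentPairs, SimpleGraph.mem_neighborFinset]
    tauto

theorem dirichletForm_comm : dirichletForm G B f g = dirichletForm G B g f := by
  simp only [dirichletForm, mul_comm]

theorem dirichletForm_smul_smul (c : ℝ) :
    dirichletForm G B (c • f) (c • g) = c ^ 2 * dirichletForm G B f g := by
  simp only [dirichletForm, Finset.mul_sum, Pi.smul_apply, smul_eq_mul]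
  exact Finset.sum_congr rfl fun p _ => by ring

theorem dirichletForm_self_nonneg : 0 ≤ dirichletForm G B f f :=
  mul_nonneg (by norm_num) (Finset.sum_nonneg fun _ _ => mul_self_nonneg _)

theorem sq_dirichletForm_le :
    dirichletForm G B f g ^ 2 ≤ dirichletForm G B f f * dirichletForm G B g g := by
  have h := Finset.sum_mul_sq_le_sq_mul_sq (incidentPairs G B)
    (fun p => f p.1 - f p.2) (fun p => g p.1 - g p.2)
  simp only [dirichletForm, ← sq]
  linarith

theorem energy_eq_ofReal_dirichletForm (hf : ∀ x ∉ B, f x = 0) :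
    energy G f = ENNReal.ofReal (dirichletForm G B f f) := by
  rw [energy, dirichletForm, tsum_eq_sum (s := incidentPairs G B),
    ENNReal.ofReal_mul (by norm_num), ENNReal.ofReal_sum_of_nonneg fun _ _ => mul_self_nonneg _]
  · congr 1
    · simp
    · refine Finset.sum_congr rfl fun p hp => ?_
      rw [if_pos (mem_incidentPairs.1 hp).1, sq]
  · intro p hp
    rw [mem_incidentPairs, not_and, not_or] at hp
    split_ifs with hadj
    · simp [hf _ (hp hadj).1, hf _ (hp hadj).2]
    · rfl

theorem degInner_comm : degInner G B f g = degInner G B g f := by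
  simp only [degInner, mul_right_comm]

theorem degInner_sub_right (h : V → ℝ) :
    degInner G B f (g - h) = degInner G B f g - degInner G B f h := by
  simp only [degInner, Pi.sub_apply, mul_sub, Finset.sum_sub_distrib]

theorem degInner_nonneg (hf : 0 ≤ f) (hg : 0 ≤ g) : 0 ≤ degInner G B f g :=
  Finset.sum_nonneg fun y _ => mul_nonneg (mul_nonneg (by positivity) (hf y)) (hg y)

theorem sq_degInner_le : degInner G B f g ^ 2 ≤ degInner G B f f * degInner G B g g := by
  have hsqrt (u v : V → ℝ) :
      degInner G B u v = ∑ y ∈ B, (√(G.degree y) * u y) * (√(G.degree y) * v y) := by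
    refine Finset.sum_congr rfl fun y _ => ?_
    rw [mul_mul_mul_comm, Real.mul_self_sqrt (Nat.cast_nonneg _), mul_assoc]
  simp only [hsqrt, ← sq]
  exact Finset.sum_mul_sq_le_sq_mul_sq B _ _

theorem degree_mul_killedAvg {y : V} (hy : y ∈ B) (f : V → ℝ) :
    G.degree y * killedAvg G B f y = ∑ z ∈ G.neighborFinset y, f z := by
  have hempty : (G.degree y : ℝ) = 0 → ∑ z ∈ G.neighborFinset y, f z = 0 := fun h => by
    rw [Finset.card_eq_zero.1 (Nat.cast_eq_zero.1 h), Finset.sum_empty]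
  simpa [killedAvg, hy] using mul_div_cancel_of_imp' hempty

theorem killedAvg_of_notMem {y : V} (hy : y ∉ B) (f : V → ℝ) : killedAvg G B f y = 0 :=
  if_neg hy

theorem killedAvg_nonneg (hf : 0 ≤ f) : 0 ≤ killedAvg G B f := by
  intro y
  by_cases hy : y ∈ B
  · simpa [killedAvg, hy] using div_nonneg (Finset.sum_nonneg fun z _ => hf z) (by positivity)
  · exact (killedAvg_of_notMem hy f).ge

theorem dirichletForm_eq_degInner (hf : ∀ x ∉ B, f x = 0) :
    dirichletForm G B f g = degInner G B f (g - killedAvg G B g) := by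
  have hswap := sum_incidentPairs_swap (G := G) (B := B) fun p => f p.1 * (g p.1 - g p.2)
  calc dirichletForm G B f g
      = 1 / 2 * (∑ p ∈ incidentPairs G B, f p.1 * (g p.1 - g p.2) +
          ∑ p ∈ incidentPairs G B, f p.2 * (g p.2 - g p.1)) := by
        rw [dirichletForm, ← Finset.sum_add_distrib]
        congr 2 with p
        ring
    _ = ∑ p ∈ incidentPairs G B, f p.1 * (g p.1 - g p.2) := by
        simp only [Prod.fst_swap, Prod.snd_swap] at hswap
        rw [hswap]
        ring
    _ = ∑ x ∈ B, ∑ y ∈ G.neighborFinset x, f x * (g x - g y) :=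
        sum_incidentPairs_of_eq_zero fun p hp => by rw [hf _ hp, zero_mul]
    _ = degInner G B f (g - killedAvg G B g) := by
        refine Finset.sum_congr rfl fun x hx => ?_
        rw [← Finset.mul_sum, Finset.sum_sub_distrib, ← degree_mul_killedAvg hx g,
          Finset.sum_const, G.card_neighborFinset_eq_degree, nsmul_eq_mul, Pi.sub_apply]
        ring

theorem degInner_killedAvg_left (hf : ∀ x ∉ B, f x = 0) (hg : ∀ x ∉ B, g x = 0) :
    degInner G B (killedAvg G B f) g = degInner G B f (killedAvg G B g) := by
  have h := dirichletForm_comm (G := G) (B := B) (f := f) (g := g)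
  rw [dirichletForm_eq_degInner hf, dirichletForm_eq_degInner hg, degInner_sub_right,
    degInner_sub_right, degInner_comm (f := g), degInner_comm (f := g)] at h
  linarith

end DirichletForm

section HeatKernel

variable (G : SimpleGraph V) [G.LocallyFinite] (B : Finset V) (x : V)

/-- The heat kernel of the simple random walk killed upon exiting `B`: for `x ∈ B`, its value at `y`
is the probability that the walk from `x` is at `y` at time `n`, divided by the degree of `y`. -/
def heatKernel (n : ℕ) : V → ℝ :=
  (killedAvg G B ^ n) (Pi.single x (G.degree x : ℝ)⁻¹)

/-- The Green density of the killed walk from `x`, truncated at time `N`. -/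
def truncGreen (N : ℕ) : V → ℝ :=
  ∑ n ∈ Finset.range N, heatKernel G B x n

variable {G B x} {f : V → ℝ}

theorem heatKernel_zero : heatKernel G B x 0 = Pi.single x (G.degree x : ℝ)⁻¹ := rfl

theorem heatKernel_succ (n : ℕ) :
    heatKernel G B x (n + 1) = killedAvg G B (heatKernel G B x n) := by
  rw [heatKernel, heatKernel, pow_succ', Module.End.mul_apply]

theorem heatKernel_nonneg (n : ℕ) : 0 ≤ heatKernel G B x n := by
  induction n with
  | zero => exact Pi.single_nonneg.2 (by positivity)
  | succ n ih => exact heatKernel_succ (G := G) n ▸ killedAvg_nonneg ih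

theorem truncGreen_nonneg (N : ℕ) : 0 ≤ truncGreen G B x N :=
  Finset.sum_nonneg fun n _ => heatKernel_nonneg n

theorem truncGreen_sub_killedAvg (N : ℕ) :
    truncGreen G B x N - killedAvg G B (truncGreen G B x N) =
      heatKernel G B x 0 - heatKernel G B x N := by
  simp only [truncGreen, map_sum, ← heatKernel_succ]
  rw [← Finset.sum_sub_distrib, Finset.sum_range_sub']

theorem heatKernel_of_notMem (hx : x ∈ B) (n : ℕ) : ∀ y ∉ B, heatKernel G B x n y = 0 := by
  intro y hy
  cases n with
  | zero => exact Pi.single_eq_of_ne (ne_of_mem_of_not_mem hx hy).symm _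
  | succ n => rw [heatKernel_succ, killedAvg_of_notMem hy]

theorem truncGreen_of_notMem (hx : x ∈ B) (N : ℕ) : ∀ y ∉ B, truncGreen G B x N y = 0 := by
  intro y hy
  rw [truncGreen, Finset.sum_apply]
  exact Finset.sum_eq_zero fun n _ => heatKernel_of_notMem hx n y hy

theorem degInner_heatKernel_zero (hx : x ∈ B) (hdeg : 0 < G.degree x) (f : V → ℝ) :
    degInner G B f (heatKernel G B x 0) = f x := by
  rw [degInner, Finset.sum_eq_single_of_mem x hx fun y _ hyx => by simp [heatKernel_zero, hyx]]
  rw [heatKernel_zero, Pi.single_eq_same]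
  field_simp

theorem degInner_heatKernel (hx : x ∈ B) (hdeg : 0 < G.degree x) (n m : ℕ) :
    degInner G B (heatKernel G B x n) (heatKernel G B x m) = heatKernel G B x (n + m) x := by
  induction m generalizing n with
  | zero => rw [degInner_heatKernel_zero hx hdeg, add_zero]
  | succ m ih =>
    rw [heatKernel_succ, ← degInner_killedAvg_left (heatKernel_of_notMem hx n)
      (heatKernel_of_notMem hx m), ← heatKernel_succ, ih, add_right_comm, add_assoc]

theorem heatKernel_two_mul_add_one_le (hx : x ∈ B) (hdeg : 0 < G.degree x) (n : ℕ) :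
    heatKernel G B x (2 * n + 1) x ≤ heatKernel G B x (2 * n) x := by
  have h := dirichletForm_self_nonneg (G := G) (B := B) (f := heatKernel G B x n)
  rw [dirichletForm_eq_degInner (heatKernel_of_notMem hx n), degInner_sub_right,
    ← heatKernel_succ, degInner_heatKernel hx hdeg, degInner_heatKernel hx hdeg, ← add_assoc,
    ← two_mul] at h
  linarith

theorem dirichletForm_truncGreen (hx : x ∈ B) (hdeg : 0 < G.degree x) (hf : ∀ y ∉ B, f y = 0)
    (N : ℕ) :
    dirichletForm G B f (truncGreen G B x N) = f x - degInner G B f (heatKernel G B x N) := by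
  rw [dirichletForm_eq_degInner hf, truncGreen_sub_killedAvg, degInner_sub_right,
    degInner_heatKernel_zero hx hdeg]

theorem dirichletForm_truncGreen_self_le (hx : x ∈ B) (hdeg : 0 < G.degree x) (N : ℕ) :
    dirichletForm G B (truncGreen G B x N) (truncGreen G B x N) ≤ truncGreen G B x N x := by
  rw [dirichletForm_truncGreen hx hdeg (truncGreen_of_notMem hx N)]
  exact sub_le_self _ (degInner_nonneg (truncGreen_nonneg N) (heatKernel_nonneg N))

theorem ofReal_truncGreen_le_effRes (hx : x ∈ B) (hdeg : 0 < G.degree x) (N : ℕ) :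
    ENNReal.ofReal (truncGreen G B x N x) ≤ effRes G {x} (↑B)ᶜ := by
  set t := truncGreen G B x N x
  rcases (truncGreen_nonneg (G := G) (B := B) (x := x) N x).eq_or_lt with ht | ht
  · simp [t, ← ht]
  set f := t⁻¹ • truncGreen G B x N
  have hf : ∀ y ∉ B, f y = 0 := fun y hy => by simp [f, truncGreen_of_notMem hx N y hy]
  have hfx : f x = 1 := inv_mul_cancel₀ ht.ne'
  have hform : dirichletForm G B f f ≤ t⁻¹ := by
    calc dirichletForm G B f f
        = t⁻¹ ^ 2 * dirichletForm G B (truncGreen G B x N) (truncGreen G B x N) :=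
          dirichletForm_smul_smul _
      _ ≤ t⁻¹ ^ 2 * t := by
          gcongr
          exact dirichletForm_truncGreen_self_le hx hdeg N
      _ = t⁻¹ := by field_simp
  rw [effRes, ENNReal.le_inv_iff_le_inv, ← ENNReal.ofReal_inv_of_pos ht]
  have henergy := energy_eq_ofReal_dirichletForm (G := G) hf
  calc _ ≤ energy G f :=
        iInf₂_le f ⟨henergy ▸ ENNReal.ofReal_ne_top, by simpa using hfx, fun y hy => hf y hy⟩
    _ ≤ ENNReal.ofReal t⁻¹ := henergy ▸ ENNReal.ofReal_le_ofReal hform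

theorem tendsto_degInner_heatKernel (hx : x ∈ B) (hdeg : 0 < G.degree x)
    (hsum : Summable fun n => heatKernel G B x n x) (f : V → ℝ) :
    Filter.Tendsto (fun N => degInner G B f (heatKernel G B x N)) Filter.atTop (nhds 0) := by
  have hdiag : Filter.Tendsto (fun N => degInner G B f f * heatKernel G B x (N + N) x)
      Filter.atTop (nhds 0) := by
    have hdouble : Filter.Tendsto (fun N : ℕ => N + N) Filter.atTop Filter.atTop :=
      Filter.tendsto_id.atTop_add_atTop Filter.tendsto_id
    simpa using (hsum.tendsto_atTop_zero.comp hdouble).const_mul (degInner G B f f)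
  have hsq : Filter.Tendsto (fun N => degInner G B f (heatKernel G B x N) ^ 2)
      Filter.atTop (nhds 0) :=
    squeeze_zero (fun _ => sq_nonneg _)
      (fun N => degInner_heatKernel hx hdeg N N ▸ sq_degInner_le) hdiag
  refine (tendsto_zero_iff_abs_tendsto_zero _).2 ?_
  simpa [Function.comp_def, Real.sqrt_sq_eq_abs] using hsq.sqrt

theorem effRes_le_tsum_heatKernel (hx : x ∈ B) (hdeg : 0 < G.degree x)
    (hsum : Summable fun n => heatKernel G B x n x) :
    effRes G {x} (↑B)ᶜ ≤ ENNReal.ofReal (∑' n, heatKernel G B x n x) := by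
  set R := ∑' n, heatKernel G B x n x
  have hR (N : ℕ) : truncGreen G B x N x ≤ R := by
    rw [truncGreen, Finset.sum_apply]
    exact hsum.sum_le_tsum _ fun n _ => heatKernel_nonneg n x
  refine ENNReal.inv_le_iff_inv_le.1 (le_iInf₂ ?_)
  rintro f ⟨-, hfx, hfB⟩
  have hf : ∀ y ∉ B, f y = 0 := fun y hy => hfB y hy
  have hfx : f x = 1 := hfx x rfl
  have hlim : Filter.Tendsto (fun N => (1 - degInner G B f (heatKernel G B x N)) ^ 2)
      Filter.atTop (nhds 1) := by
    simpa using ((tendsto_degInner_heatKernel hx hdeg hsum f).const_sub 1).pow 2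
  have hone : 1 ≤ R * dirichletForm G B f f := by
    refine le_of_tendsto' hlim fun N => ?_
    calc (1 - degInner G B f (heatKernel G B x N)) ^ 2
        = dirichletForm G B f (truncGreen G B x N) ^ 2 := by
          rw [dirichletForm_truncGreen hx hdeg hf, hfx]
      _ ≤ dirichletForm G B f f * dirichletForm G B (truncGreen G B x N) (truncGreen G B x N) :=
          sq_dirichletForm_le
      _ ≤ dirichletForm G B f f * R := by
          gcongr
          · exact dirichletForm_self_nonneg
          · exact (dirichletForm_truncGreen_self_le hx hdeg N).trans (hR N)
      _ = R * dirichletForm G B f f := mul_comm _ _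
  rw [energy_eq_ofReal_dirichletForm hf, ← one_div]
  refine ENNReal.div_le_of_le_mul' ?_
  rw [← ENNReal.ofReal_mul (tsum_nonneg fun n => heatKernel_nonneg n x)]
  exact ENNReal.one_le_ofReal.2 hone

theorem effRes_eq_tsum_heatKernel (hx : x ∈ B) (hdeg : 0 < G.degree x) :
    effRes G {x} (↑B)ᶜ = ∑' n, ENNReal.ofReal (heatKernel G B x n x) := by
  have hnonneg (n : ℕ) : 0 ≤ heatKernel G B x n x := heatKernel_nonneg n x
  refine le_antisymm ?_ (ENNReal.tsum_le_of_sum_range_le fun N => ?_)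
  · by_cases hsum : Summable fun n => heatKernel G B x n x
    · rw [← ENNReal.ofReal_tsum_of_nonneg hnonneg hsum]
      exact effRes_le_tsum_heatKernel hx hdeg hsum
    · have htop : ∑' n, ENNReal.ofReal (heatKernel G B x n x) = ∞ := by
        by_contra hne
        exact hsum (by simpa [hnonneg] using ENNReal.summable_toReal hne)
      exact htop ▸ le_top
  · rw [← ENNReal.ofReal_sum_of_nonneg fun n _ => hnonneg n]
    simpa [truncGreen] using ofReal_truncGreen_le_effRes hx hdeg N

end HeatKernel

section KilledWalk

instance : DiscreteMeasurableSpace (Option V) := ⟨fun _ => trivial⟩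

variable (G : SimpleGraph V) [G.LocallyFinite] (B : Set V)

/-- One-step transition probabilities of two independent walks killed upon exiting `B`. -/
def killedPairStep (s t : Option V × Option V) : ℝ≥0∞ :=
  killedStep G B s.1 t.1 * killedStep G B s.2 t.2

/-- The states of a pair of killed walks in which both are at the same vertex of `B`. -/
def collisionSet : Set (Option V × Option V) :=
  (fun x => (some x, some x)) '' B

variable {G B}

theorem collisions_eq_visits : collisions B = visits (collisionSet B) := by
  ext ω
  refine tsum_congr fun n => ?_
  rw [Set.indicator_apply]
  congr 1
  simp [collisionSet, Prod.ext_iff, eq_comm]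

theorem stepProb_killedStep_succ (a : Option V) (n : ℕ) (y : V) :
    stepProb (killedStep G B) a (n + 1) (some y) =
      ∑ z ∈ G.neighborFinset y,
        stepProb (killedStep G B) a n (some z) * killedStep G B (some z) (some y) := by
  simp only [stepProb]
  rw [tsum_eq_sum (s := (G.neighborFinset y).map Function.Embedding.some), Finset.sum_map]
  · rfl
  · rintro (_ | z) hz
    · exact mul_zero _
    · have hnadj : ¬ G.Adj z y := fun hadj => hz (by simpa using hadj.symm)
      simp [killedStep, hnadj]

theorem IsKilledPairLaw.isMarkovLaw {a b : V} {ν : Measure (ℕ → Option V × Option V)}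
    (hν : IsKilledPairLaw G B a b ν) :
    IsMarkovLaw (killedPairStep G B) (some a, some b) ν := by
  intro n w
  rw [hν.2, killedCylProb, killedCylProb, mul_mul_mul_comm, ← Finset.prod_mul_distrib]
  congr 1
  simp only [Pi.single_apply, Prod.ext_iff, ite_and]
  split_ifs <;> simp

end KilledWalk

section CollisionGreenFunction

variable {G : SimpleGraph V} [G.LocallyFinite] {B : Finset V} {x : V}

theorem stepProb_killedStep (hx : x ∈ B) (hdeg : 0 < G.degree x) (n : ℕ) (y : V) :
    stepProb (killedStep G B) (some x) n (some y) =
      ENNReal.ofReal (G.degree y * heatKernel G B x n y) := by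
  induction n generalizing y with
  | zero =>
    rcases eq_or_ne y x with rfl | hyx
    · simp [stepProb, heatKernel_zero, hdeg.ne']
    · simp [stepProb, heatKernel_zero, hyx]
  | succ n ih =>
    rw [stepProb_killedStep_succ, heatKernel_succ]
    by_cases hy : y ∈ B
    · rw [degree_mul_killedAvg hy, ENNReal.ofReal_sum_of_nonneg fun z _ => heatKernel_nonneg n z]
      refine Finset.sum_congr rfl fun z hz => ?_
      have hadj : G.Adj z y := ((G.mem_neighborFinset y z).1 hz).symm
      have hz_deg : (0 : ℝ) < G.degree z := Nat.cast_pos.2 hadj.degree_pos_left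
      by_cases hzB : z ∈ B
      · rw [ih, killedStep, if_pos ⟨hzB, hadj, hy⟩, ← ENNReal.ofReal_natCast,
          ← ENNReal.ofReal_inv_of_pos hz_deg, ← ENNReal.ofReal_mul
            (mul_nonneg hz_deg.le (heatKernel_nonneg n z)), mul_right_comm,
          mul_inv_cancel₀ hz_deg.ne', one_mul]
      · simp [ih, heatKernel_of_notMem hx n z hzB]
    · simp [killedStep, hy, killedAvg_of_notMem hy]

theorem greenFun_collisionSet (hx : x ∈ B) (hdeg : 0 < G.degree x) :
    greenFun (killedPairStep G B) (collisionSet B) (some x, some x) =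
      ∑' n, ENNReal.ofReal (∑ y ∈ B, (G.degree y * heatKernel G B x n y) ^ 2) := by
  have hinj : Function.Injective fun y : V => (some y, some y) := fun y z h => by simpa using h
  refine tsum_congr fun n => ?_
  rw [collisionSet, tsum_image (fun p => stepProb (killedPairStep G B) _ n p) hinj.injOn,
    Finset.tsum_subtype' B fun y => stepProb (killedPairStep G B) _ n (some y, some y),
    ENNReal.ofReal_sum_of_nonneg fun _ _ => sq_nonneg _]
  refine Finset.sum_congr rfl fun y _ => ?_
  rw [show killedPairStep G B = fun s t => killedStep G B s.1 t.1 * killedStep G B s.2 t.2 from rfl,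
    stepProb_prod, stepProb_killedStep hx hdeg, ← sq,
    ENNReal.ofReal_pow (mul_nonneg (Nat.cast_nonneg _) (heatKernel_nonneg n y))]

theorem heatKernel_two_mul_le_sum_sq (hx : x ∈ B) (hdeg : 0 < G.degree x) (n : ℕ) :
    heatKernel G B x (2 * n) x ≤ ∑ y ∈ B, (G.degree y * heatKernel G B x n y) ^ 2 := by
  rw [two_mul, ← degInner_heatKernel hx hdeg]
  refine Finset.sum_le_sum fun y _ => ?_
  rw [mul_assoc, ← sq, mul_pow]
  gcongr
  exact_mod_cast Nat.le_self_pow two_ne_zero _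

theorem sum_sq_le_mul_heatKernel_two_mul {Δ : ℕ} (hΔ : ∀ y ∈ B, G.degree y ≤ Δ) (hx : x ∈ B)
    (hdeg : 0 < G.degree x) (n : ℕ) :
    ∑ y ∈ B, (G.degree y * heatKernel G B x n y) ^ 2 ≤ Δ * heatKernel G B x (2 * n) x := by
  rw [two_mul, ← degInner_heatKernel hx hdeg, degInner, Finset.mul_sum]
  refine Finset.sum_le_sum fun y hy => ?_
  rw [mul_assoc (G.degree y : ℝ), ← sq, mul_pow, ← mul_assoc, sq (G.degree y : ℝ)]
  gcongr
  exact_mod_cast hΔ y hy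

theorem effRes_le_two_mul_greenFun (hx : x ∈ B) (hdeg : 0 < G.degree x) :
    effRes G {x} (↑B)ᶜ ≤
      2 * greenFun (killedPairStep G B) (collisionSet B) (some x, some x) := by
  set K : ℕ → ℝ≥0∞ := fun n => ENNReal.ofReal (heatKernel G B x n x)
  calc effRes G {x} (↑B)ᶜ = ∑' n, K (2 * n) + ∑' n, K (2 * n + 1) := by
        rw [effRes_eq_tsum_heatKernel hx hdeg, tsum_even_add_odd ENNReal.summable ENNReal.summable]
    _ ≤ ∑' n, K (2 * n) + ∑' n, K (2 * n) := by
        gcongr with n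
        exact ENNReal.ofReal_le_ofReal (heatKernel_two_mul_add_one_le hx hdeg n)
    _ = 2 * ∑' n, K (2 * n) := (two_mul _).symm
    _ ≤ 2 * greenFun (killedPairStep G B) (collisionSet B) (some x, some x) := by
        rw [greenFun_collisionSet hx hdeg]
        gcongr with n
        exact ENNReal.ofReal_le_ofReal (heatKernel_two_mul_le_sum_sq hx hdeg n)

theorem greenFun_le_mul_effRes {Δ : ℕ} (hΔ : ∀ y ∈ B, G.degree y ≤ Δ) (hx : x ∈ B)
    (hdeg : 0 < G.degree x) :
    greenFun (killedPairStep G B) (collisionSet B) (some x, some x) ≤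
      Δ * effRes G {x} (↑B)ᶜ := by
  set K : ℕ → ℝ≥0∞ := fun n => ENNReal.ofReal (heatKernel G B x n x)
  calc greenFun (killedPairStep G B) (collisionSet B) (some x, some x)
      ≤ ∑' n, Δ * K (2 * n) := by
        rw [greenFun_collisionSet hx hdeg]
        gcongr with n
        rw [← ENNReal.ofReal_natCast, ← ENNReal.ofReal_mul (Nat.cast_nonneg _)]
        exact ENNReal.ofReal_le_ofReal (sum_sq_le_mul_heatKernel_two_mul hΔ hx hdeg n)
    _ = Δ * ∑' n, K (2 * n) := ENNReal.tsum_mul_left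
    _ ≤ Δ * ∑' n, K n := by
        exact mul_le_mul' le_rfl <|
          ENNReal.tsum_comp_le_tsum_of_injective (mul_right_injective₀ two_ne_zero) K
    _ = Δ * effRes G {x} (↑B)ᶜ := by rw [effRes_eq_tsum_heatKernel hx hdeg]

end CollisionGreenFunction

section Collisions

variable {G : SimpleGraph V} [G.LocallyFinite]

theorem le_measure_collisions_mem_Icc [Countable V] {B : Finset V} {o : V} (ho : o ∈ B)
    (hpos : ∀ x ∈ B, 0 < G.degree x) {Δ : ℕ} (hΔ : ∀ x ∈ B, G.degree x ≤ Δ)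
    {ρ m θ b : ℝ} (hρ : ∀ x ∈ B, effRes G {x} (↑B)ᶜ ≤ ENNReal.ofReal ρ)
    (hm : ENNReal.ofReal (2 * m) ≤ effRes G {o} (↑B)ᶜ) (hm_pos : 0 < m) (hθ₀ : 0 ≤ θ)
    (hθ₁ : θ ≤ 1) (hb : 0 < b) {ν : Measure (ℕ → Option V × Option V)}
    (hν : IsKilledPairLaw G B o o ν) :
    ENNReal.ofReal ((1 - θ) ^ 2 * m / (2 * (Δ * ρ)) - Δ * ρ / b) ≤
      ν {ω | ENNReal.ofReal (θ * m) ≤ collisions B ω ∧ collisions B ω ≤ ENNReal.ofReal b} := by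
  have := hν.1
  have hmarkov := hν.isMarkovLaw
  have hgreen : ∀ x ∈ B, greenFun (killedPairStep G B) (collisionSet B) (some x, some x) ≤
      ENNReal.ofReal (Δ * ρ) := fun x hx => by
    rw [ENNReal.ofReal_mul (Nat.cast_nonneg _), ENNReal.ofReal_natCast]
    exact (greenFun_le_mul_effRes hΔ hx (hpos x hx)).trans (by gcongr; exact hρ x hx)
  have hfirst_ge : ENNReal.ofReal m ≤ ∫⁻ ω, visits (collisionSet B) ω ∂ν := by
    rw [hmarkov.lintegral_visits, ← ENNReal.mul_le_mul_iff_right two_ne_zero ENNReal.ofNat_ne_top,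
      ← ENNReal.ofReal_ofNat, ← ENNReal.ofReal_mul zero_le_two, ENNReal.ofReal_ofNat]
    exact hm.trans (effRes_le_two_mul_greenFun ho (hpos o ho))
  have hfirst_le : ∫⁻ ω, visits (collisionSet B) ω ∂ν ≤ ENNReal.ofReal (Δ * ρ) :=
    (hmarkov.lintegral_visits _).trans_le (hgreen o ho)
  have hsecond := hmarkov.lintegral_sq_visits_le (D := collisionSet B)
    (Set.forall_mem_image.2 hgreen)
  rw [collisions_eq_visits]
  exact le_measure_mem_Icc_of_sq_lintegral_le
    (measurable_visits (collisionSet (B : Set V)).to_countable.measurableSet)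
    hθ₀ hθ₁ hm_pos hb hfirst_ge hfirst_le hsecond

theorem effRes_ball_compl_le [Infinite V] (hconn : G.Connected) (o x : V) (r : ℕ) :
    effRes G {x} {y | G.dist o y ≤ r}ᶜ ≤ (G.dist o x + r + 1 : ℕ) := by
  obtain ⟨u, hu⟩ := exists_vertex_dist_eq hconn o (r + 1)
  have hu_notMem : u ∈ {y | G.dist o y ≤ r}ᶜ := by simp [hu]
  refine (effRes_singleton_le_dist (hconn x u) hu_notMem).trans ?_
  have htriangle := hconn.dist_triangle (u := x) (v := o) (w := u)
  rw [G.dist_comm (u := x) (v := o)] at htriangle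
  exact_mod_cast (by omega : G.dist x u ≤ G.dist o x + r + 1)

theorem effRes_ball_compl_le_three_mul [Infinite V] (hconn : G.Connected) {o x : V} {r : ℕ}
    (hr : 1 ≤ r) (hx : G.dist o x ≤ r) :
    effRes G {x} {y | G.dist o y ≤ r}ᶜ ≤ ENNReal.ofReal (3 * r) := by
  refine (effRes_ball_compl_le hconn o x r).trans ?_
  rw [← ENNReal.ofReal_natCast]
  exact ENNReal.ofReal_le_ofReal (by exact_mod_cast (by omega : G.dist o x + r + 1 ≤ 3 * r))

theorem collision_second_moment_method_general [Infinite V] (hconn : G.Connected) (o : V)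
    {Δ : ℕ} (hdeg : ∀ x, G.degree x ≤ Δ) {r : ℕ} (hr : 1 ≤ r) {ε : ℝ} (hε : 0 < ε)
    (hlow : ENNReal.ofReal (12 * ε * r) ≤ effRes G {o} {x | G.dist o x ≤ r}ᶜ)
    {ν : Measure (ℕ → Option V × Option V)}
    (hν : IsKilledPairLaw G {x | G.dist o x ≤ r} o o ν) :
    ENNReal.ofReal (ε ^ 2 / (2 * Δ)) ≤
      ν {ω | ENNReal.ofReal (ε * r) ≤ collisions {x | G.dist o x ≤ r} ω ∧
        collisions {x | G.dist o x ≤ r} ω ≤ ENNReal.ofReal (2 * Δ ^ 2 * ε⁻¹ ^ 2 * r)} := by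
  have := countable_of_connected hconn
  have hpos (x : V) : 0 < G.degree x := hconn.preconnected.degree_pos_of_nontrivial x
  have hΔ : (0 : ℝ) < Δ := Nat.cast_pos.2 ((hpos o).trans_le (hdeg o))
  have hr' : (1 : ℝ) ≤ r := Nat.one_le_cast.2 hr
  obtain ⟨B, hB⟩ := (finite_setOf_dist_le hconn o r).exists_finset_coe
  have hmem {x : V} : x ∈ B ↔ G.dist o x ≤ r := by rw [← Finset.mem_coe, hB]; rfl
  have hε_le : ε ≤ 1 / 4 := by
    have h := hlow.trans (effRes_ball_compl_le_three_mul hconn hr (by simp))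
    rw [ENNReal.ofReal_le_ofReal_iff (by positivity)] at h
    nlinarith
  have hρ : ∀ x ∈ B, effRes G {x} (↑B)ᶜ ≤ ENNReal.ofReal (3 * r) := fun x hx =>
    hB ▸ effRes_ball_compl_le_three_mul hconn hr (hmem.1 hx)
  rw [← hB] at hlow hν ⊢
  have hbound := le_measure_collisions_mem_Icc (m := 6 * ε * r) (θ := 1 / 6)
    (b := 2 * Δ ^ 2 * ε⁻¹ ^ 2 * r) (hmem.2 (by simp)) (fun x _ => hpos x) (fun x _ => hdeg x) hρ
    (by convert hlow using 2; ring) (by positivity) (by norm_num) (by norm_num) (by positivity) hν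
  rw [show (1 / 6 : ℝ) * (6 * ε * r) = ε * r by ring] at hbound
  refine (ENNReal.ofReal_le_ofReal ?_).trans hbound
  calc ε ^ 2 / (2 * Δ) ≤ (25 / 36 * ε - 3 / 2 * ε ^ 2) / Δ := by
        rw [← div_div]
        gcongr
        nlinarith
    _ = _ := by field_simp; ring

end Collisions

/-- If every vertex of `G` has degree at most `6` and
`12εr ≤ R_eff(0, V∖B_r) ≤ r`, then the number of collisions of two independent
simple random walks on `G` killed upon exiting the graph-metric ball `B_r`,
both started at `0`, satisfies `P₀₀(εr ≤ Z_{B_r} ≤ 72ε⁻²r) ≥ ε²/12`. -/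
theorem collision_second_moment_method
    (G : SimpleGraph V) [G.LocallyFinite] (hconn : G.Connected) (hinf : Infinite V)
    (o : V) (hdeg : ∀ x : V, G.degree x ≤ 6)
    (r : ℕ) (hr : 1 ≤ r) (ε : ℝ) (hε : 0 < ε)
    (Br : Set V) (hBr : Br = {x : V | G.dist o x ≤ r})
    (hlow : ENNReal.ofReal (12 * ε * r) ≤ effRes G {o} Brᶜ)
    (hup : effRes G {o} Brᶜ ≤ (r : ℝ≥0∞))
    (ν : Measure (ℕ → Option V × Option V)) (hν : IsKilledPairLaw G Br o o ν) :
    ENNReal.ofReal (ε ^ 2 / 12) ≤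
      ν {ω | ENNReal.ofReal (ε * r) ≤ collisions Br ω ∧
             collisions Br ω ≤ ENNReal.ofReal (72 * ε⁻¹ ^ 2 * r)} := by
  subst hBr
  convert collision_second_moment_method_general hconn o hdeg hr hε hlow hν using 6 <;> norm_num

end
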